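/- Let G be the graph on {a,b,p,q,x,z} with edges ab, ap, ax, bx, bq, xp, xq, pz, qz (a pentagon a-p-z-q-b-a together with a central vertex x adjacent to a, b, p, q). Then for every s ≥ 2, I(G)^s has linear quotients. -/

import Mathlib

open MvPolynomial

/-- An ideal is generated by a subset of the variables. -/
def genByVars {K : Type*} [Field K] {σ : Type*} (J : Ideal (MvPolynomial σ K)) : Prop :=
  ∃ S : Set σ, J = Ideal.span ((fun i => (X i : MvPolynomial σ K)) '' S)

/-- An equigenerated monomial ideal has linear quotients: there is an ordering of a
minimal monomial generating system (an antichain of exponent vectors) such that each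
successive colon ideal is generated by variables. -/
def HasLinearQuotients {K : Type*} [Field K] {σ : Type*} (I : Ideal (MvPolynomial σ K)) : Prop :=
  ∃ (r : ℕ) (d : Fin r → (σ →₀ ℕ)),
    (∀ i j : Fin r, i ≠ j → ¬ d i ≤ d j) ∧
    Ideal.span (Set.range fun i => (monomial (d i) (1 : K))) = I ∧
    ∀ i : Fin r,
      genByVars (Submodule.colon
        (Ideal.span ((fun j => (monomial (d j) (1 : K))) '' {j | j < i}))
        (Ideal.span {(monomial (d i) (1 : K))}))

/-- A graph is gapfree if any two disjoint edges are joined by an edge meeting both. -/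
def Gapfree {V : Type*} (G : SimpleGraph V) : Prop :=
  ∀ a b c d : V, G.Adj a b → G.Adj c d → ({a, b} : Set V) ∩ {c, d} = ∅ →
    ∃ u v : V, G.Adj u v ∧ (({u, v} : Set V) ∩ {a, b}).Nonempty ∧
      (({u, v} : Set V) ∩ {c, d}).Nonempty

/-- The edge ideal of a graph. -/
noncomputable def edgeIdeal (K : Type*) [Field K] {V : Type*} (G : SimpleGraph V) :
    Ideal (MvPolynomial V K) :=
  Ideal.span {m | ∃ a b : V, G.Adj a b ∧ m = X a * X b}

/-- The graph on `{a,b,p,q,x,z}` (`a=0, b=1, p=2, q=3, x=4, z=5`) with edges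
`ab, ap, ax, bx, bq, xp, xq, pz, qz`: a pentagon `a-p-z-q-b-a` together with a central
vertex `x` adjacent to `a, b, p, q`. -/
def pentagonCentral : SimpleGraph (Fin 6) :=
  SimpleGraph.fromRel (fun i j =>
    (i = 0 ∧ j = 1) ∨ (i = 0 ∧ j = 2) ∨ (i = 0 ∧ j = 4) ∨ (i = 1 ∧ j = 4) ∨
    (i = 1 ∧ j = 3) ∨ (i = 4 ∧ j = 2) ∨ (i = 4 ∧ j = 3) ∨ (i = 2 ∧ j = 5) ∨
    (i = 3 ∧ j = 5))

/-! The exponent vectors of the generators of `I(G) ^ s` are the lattice points of a polytope, so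
replacing one variable by another in a generator gives a generator as soon as a few linear
inequalities hold. Order the generators lexicographically with `z` increasing, then `x`, `a` and `b`
decreasing, then by the distance of `p` from `a - b + 1`; linear quotients follow if, whenever `v`
comes no later than `u`, some variable with `u i < v i` can replace another one in `u` so as
to lower `u` in this order.

The hard case is `v 5 < u 5`. If no such variable can replace `z`, then `p + q = s` and either
`a + q = s` or `b + p = s` in `u`. If `a + q = s`, then replace `q` by `a` if `b > 0`, and
otherwise by `p`; if `b + p = s`, then replace `p` by `b` if `a > 0`, and otherwise by `q`. The last
replacement takes `p = s - b` towards `1 - b`, which is where `s ≥ 2` enters. -/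

section LinearQuotients

variable {R σ : Type*}

/-- The exchange condition behind linear quotients: the generator `x ^ (v - u)` of the colon ideal
`(x ^ v) : (x ^ u)` is divisible by a variable `x_i` such that `x_i * x ^ u` lies in the monomial
ideal whose generators have the exponent vectors in `A`. -/
def HasExchange (A : Set (σ →₀ ℕ)) (u v : σ →₀ ℕ) : Prop :=
  ∃ w ∈ A, ∃ i, u i < v i ∧ w ≤ u + Finsupp.single i 1

theorem mem_colon_span_monomial_iff [CommSemiring R] {A : Set (σ →₀ ℕ)} {u : σ →₀ ℕ}
    {g : MvPolynomial σ R} :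
    g ∈ (Ideal.span ((fun v => monomial v (1 : R)) '' A)).colon
        (Ideal.span {monomial u (1 : R)} : Ideal (MvPolynomial σ R)) ↔
      ∀ m ∈ g.support, ∃ v ∈ A, v ≤ m + u := by
  rw [Ideal.mem_colon_span_singleton, mem_ideal_span_monomial_image]
  constructor
  · intro h m hm
    refine h (m + u) ?_
    rwa [mem_support_iff, coeff_mul_monomial, mul_one, ← mem_support_iff]
  · intro h m hm
    rw [mem_support_iff, coeff_mul_monomial', mul_one, ite_ne_right_iff, ← mem_support_iff] at hm
    simpa only [tsub_add_cancel_of_le hm.1] using h (m - u) hm.2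

theorem colon_span_monomial_eq_span_X [CommSemiring R] {A : Set (σ →₀ ℕ)} {u : σ →₀ ℕ}
    (h : ∀ v ∈ A, HasExchange A u v) :
    (Ideal.span ((fun v => monomial v (1 : R)) '' A)).colon
        (Ideal.span {monomial u (1 : R)} : Ideal (MvPolynomial σ R)) =
      Ideal.span (X '' {i | ∃ w ∈ A, w ≤ u + Finsupp.single i 1}) := by
  ext g
  rw [mem_colon_span_monomial_iff, mem_ideal_span_X_image]
  refine forall₂_congr fun m _ => ⟨?_, ?_⟩
  · rintro ⟨v, hv, hvm⟩
    obtain ⟨w, hw, i, hi, hwi⟩ := h v hv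
    have : v i ≤ m i + u i := hvm i
    exact ⟨i, ⟨w, hw, hwi⟩, by omega⟩
  · rintro ⟨i, ⟨w, hw, hwi⟩, hmi⟩
    have : Finsupp.single i 1 ≤ m := Finsupp.single_le_iff.mpr (Nat.one_le_iff_ne_zero.mpr hmi)
    exact ⟨w, hw, hwi.trans ((add_comm _ _).trans_le (add_le_add_left this u))⟩

theorem exists_injective_monotone_enumeration {α L : Type*} [LinearOrder L] {A : Set α}
    (hA : A.Finite) (f : α → L) :
    ∃ (r : ℕ) (d : Fin r → α), Function.Injective d ∧ Set.range d = A ∧ Monotone (f ∘ d) := by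
  obtain ⟨r, d, hd, rfl⟩ := hA.fin_param
  refine ⟨r, d ∘ Tuple.sort (f ∘ d), hd.comp (Equiv.injective _), ?_, Tuple.monotone_sort (f ∘ d)⟩
  exact (Tuple.sort (f ∘ d)).surjective.range_comp d

theorem eq_of_le_of_degree_eq {u v : σ →₀ ℕ} (h : u ≤ v) (hdeg : u.degree = v.degree) :
    u = v := by
  obtain ⟨w, rfl⟩ := exists_add_of_le h
  rw [map_add, left_eq_add, Finsupp.degree_eq_zero_iff] at hdeg
  rw [hdeg, add_zero]

theorem hasLinearQuotients_span_monomial_of_hasExchange {K L : Type*} [Field K] [LinearOrder L]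
    {A : Set (σ →₀ ℕ)} (hA : A.Finite) {n : ℕ} (hdeg : ∀ u ∈ A, u.degree = n)
    (f : (σ →₀ ℕ) → L)
    (h : ∀ u ∈ A, ∀ v ∈ A, v ≠ u → f v ≤ f u → HasExchange {w ∈ A | f w < f u} u v) :
    HasLinearQuotients (Ideal.span ((fun u => monomial u (1 : K)) '' A)) := by
  obtain ⟨r, d, hd, rfl, hmono⟩ := exists_injective_monotone_enumeration hA f
  have hmem : ∀ i, d i ∈ Set.range d := Set.mem_range_self
  refine ⟨r, d, fun i j hij hle => hij (hd ?_), by rw [← Set.range_comp]; rfl, fun i => ?_⟩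
  · exact eq_of_le_of_degree_eq hle ((hdeg _ (hmem i)).trans (hdeg _ (hmem j)).symm)
  · have hex : ∀ v ∈ d '' {j | j < i}, HasExchange (d '' {j | j < i}) (d i) v := by
      rintro _ ⟨j, hj, rfl⟩
      obtain ⟨_, ⟨⟨k, rfl⟩, hk⟩, hw⟩ :=
        h _ (hmem i) _ (hmem j) (hd.ne hj.ne) (hmono (le_of_lt hj))
      exact ⟨d k, ⟨k, hmono.reflect_lt hk, rfl⟩, hw⟩
    have hcolon := colon_span_monomial_eq_span_X (R := K) hex
    rw [Set.image_image] at hcolon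
    exact ⟨_, hcolon⟩

end LinearQuotients

section EdgeIdeal

open scoped Pointwise

variable {V : Type*}

/-- The exponent vectors of the minimal generators of the edge ideal of `G`. -/
def edgeExponents (G : SimpleGraph V) : Set (V →₀ ℕ) :=
  {u | ∃ i j, G.Adj i j ∧ u = Finsupp.single i 1 + Finsupp.single j 1}

theorem edgeIdeal_eq_span_monomial (K : Type*) [Field K] (G : SimpleGraph V) :
    edgeIdeal K G = Ideal.span ((fun u => monomial u (1 : K)) '' edgeExponents G) := by
  have hX (i j : V) : (X i * X j : MvPolynomial V K) =
      monomial (Finsupp.single i 1 + Finsupp.single j 1) 1 := by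
    simp only [X, monomial_mul, mul_one]
  unfold edgeIdeal edgeExponents
  congr 1
  ext m
  constructor
  · rintro ⟨i, j, hij, rfl⟩
    exact ⟨_, ⟨i, j, hij, rfl⟩, (hX i j).symm⟩
  · rintro ⟨_, ⟨i, j, hij, rfl⟩, rfl⟩
    exact ⟨i, j, hij, (hX i j).symm⟩

theorem span_monomial_mul_span_monomial {R : Type*} [CommSemiring R] (A B : Set (V →₀ ℕ)) :
    Ideal.span ((fun u => monomial u (1 : R)) '' A) *
        Ideal.span ((fun u => monomial u (1 : R)) '' B) =
      Ideal.span ((fun u => monomial u (1 : R)) '' (A + B)) := by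
  rw [Ideal.span_mul_span', ← Set.image2_mul, ← Set.image2_add, Set.image2_image_left,
    Set.image2_image_right, Set.image_image2]
  simp only [monomial_mul, mul_one]

theorem edgeIdeal_pow_eq_span_monomial (K : Type*) [Field K] {G : SimpleGraph V}
    {A : ℕ → Set (V →₀ ℕ)} (hzero : A 0 = {0}) (hsucc : ∀ s, A (s + 1) = A s + edgeExponents G)
    (s : ℕ) : edgeIdeal K G ^ s = Ideal.span ((fun u => monomial u (1 : K)) '' A s) := by
  induction s with
  | zero =>
    rw [hzero, Set.image_singleton, pow_zero, ← C_apply, C_1, Ideal.span_singleton_one,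
      Ideal.one_eq_top]
  | succ s ih =>
    rw [pow_succ, ih, edgeIdeal_eq_span_monomial, span_monomial_mul_span_monomial, hsucc]

end EdgeIdeal

section Coordinates

variable {σ : Type*} [DecidableEq σ]

theorem tsub_single_add_single_apply (u : σ →₀ ℕ) (i j k : σ) :
    (u - (Finsupp.single i 1 + Finsupp.single j 1) : σ →₀ ℕ) k =
      u k - ((if i = k then 1 else 0) + (if j = k then 1 else 0)) := by
  simp only [Finsupp.tsub_apply, Finsupp.add_apply, Finsupp.single_apply]

theorem add_single_tsub_single_apply (u : σ →₀ ℕ) (i j k : σ) :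
    (u + Finsupp.single i 1 - Finsupp.single j 1 : σ →₀ ℕ) k =
      u k + (if i = k then 1 else 0) - (if j = k then 1 else 0) := by
  simp only [Finsupp.tsub_apply, Finsupp.add_apply, Finsupp.single_apply]

end Coordinates

namespace pentagonCentral

/-- Membership of `u` in the dilated edge polytope of `pentagonCentral`: the degree is `2 * s`, each
of the six nonadjacent pairs of vertices has weight at most `s`, and the weight of `z` is at most
that of its neighbours `p` and `q`. These are the exponent vectors of the products of `s` edges. -/
structure IsPowExponent (s : ℕ) (u : Fin 6 →₀ ℕ) : Prop where
  degree : u 0 + u 1 + u 2 + u 3 + u 4 + u 5 = 2 * s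
  aq_le : u 0 + u 3 ≤ s
  az_le : u 0 + u 5 ≤ s
  bp_le : u 1 + u 2 ≤ s
  bz_le : u 1 + u 5 ≤ s
  pq_le : u 2 + u 3 ≤ s
  xz_le : u 4 + u 5 ≤ s
  z_le : u 5 ≤ u 2 + u 3

theorem IsPowExponent.degree_eq {s : ℕ} {u : Fin 6 →₀ ℕ} (hu : IsPowExponent s u) :
    u.degree = 2 * s := by
  rw [Finsupp.degree_eq_sum, Fin.sum_univ_six, hu.degree]

theorem finite_setOf_isPowExponent (s : ℕ) : {u | IsPowExponent s u}.Finite :=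
  (Finsupp.finite_of_degree_le (2 * s)).subset fun _ hu => hu.degree_eq.le

theorem isPowExponent_zero_iff {u : Fin 6 →₀ ℕ} : IsPowExponent 0 u ↔ u = 0 := by
  refine ⟨fun hu => (Finsupp.degree_eq_zero_iff u).mp hu.degree_eq, ?_⟩
  rintro rfl
  constructor <;> simp

theorem IsPowExponent.add_edge {s : ℕ} {u : Fin 6 →₀ ℕ} (hu : IsPowExponent s u) {i j : Fin 6}
    (hij : pentagonCentral.Adj i j) :
    IsPowExponent (s + 1) (u + (Finsupp.single i 1 + Finsupp.single j 1)) := by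
  obtain ⟨h, haq, haz, hbp, hbz, hpq, hxz, hz⟩ := hu
  obtain ⟨-, hij | hij⟩ := (SimpleGraph.fromRel_adj _ _ _).mp hij <;>
  obtain ⟨rfl, rfl⟩ | ⟨rfl, rfl⟩ | ⟨rfl, rfl⟩ | ⟨rfl, rfl⟩ | ⟨rfl, rfl⟩ | ⟨rfl, rfl⟩ |
    ⟨rfl, rfl⟩ | ⟨rfl, rfl⟩ | ⟨rfl, rfl⟩ := hij <;>
  constructor <;> simp only [Finsupp.add_apply, Finsupp.single_apply, Fin.reduceEq, reduceIte] <;>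
  omega

section RemoveEdge

open scoped Pointwise

variable {s : ℕ} {u : Fin 6 →₀ ℕ}

theorem mem_add_edgeExponents_of_sub {i j : Fin 6} (hij : pentagonCentral.Adj i j)
    (hi : 0 < u i) (hj : 0 < u j)
    (hu : IsPowExponent s (u - (Finsupp.single i 1 + Finsupp.single j 1))) :
    u ∈ {v | IsPowExponent s v} + edgeExponents pentagonCentral := by
  refine ⟨_, hu, _, ⟨i, j, hij, rfl⟩, tsub_add_cancel_of_le fun k => ?_⟩
  have := hij.ne
  simp only [Finsupp.add_apply, Finsupp.single_apply]
  grind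

theorem IsPowExponent.mem_add_edgeExponents_of_z_pos (hu : IsPowExponent (s + 1) u)
    (hz : 0 < u 5) : u ∈ {v | IsPowExponent s v} + edgeExponents pentagonCentral := by
  obtain ⟨h, haq, haz, hbp, hbz, hpq, hxz, hzpq⟩ := hu
  by_cases hp : 0 < u 2 ∧ u 0 + u 3 ≤ s
  · refine mem_add_edgeExponents_of_sub (i := 2) (j := 5) (by simp [pentagonCentral]) hp.1 hz ?_
    constructor <;> simp only [tsub_single_add_single_apply, Fin.reduceEq, reduceIte] <;> omega
  · have hq : 0 < u 3 := by omega
    refine mem_add_edgeExponents_of_sub (i := 3) (j := 5) (by simp [pentagonCentral]) hq hz ?_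
    constructor <;> simp only [tsub_single_add_single_apply, Fin.reduceEq, reduceIte] <;> omega

theorem IsPowExponent.mem_add_edgeExponents_of_x_pos (hu : IsPowExponent (s + 1) u)
    (hz : u 5 = 0) (hx : 0 < u 4) :
    u ∈ {v | IsPowExponent s v} + edgeExponents pentagonCentral := by
  obtain ⟨h, haq, haz, hbp, hbz, hpq, hxz, hzpq⟩ := hu
  obtain ⟨ha, hbp', hpq'⟩ | ⟨hb, haq', hpq'⟩ | ⟨hp, haq'⟩ | ⟨hq, hbp'⟩ :
      (0 < u 0 ∧ u 1 + u 2 ≤ s ∧ u 2 + u 3 ≤ s) ∨ (0 < u 1 ∧ u 0 + u 3 ≤ s ∧ u 2 + u 3 ≤ s) ∨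
        (0 < u 2 ∧ u 0 + u 3 ≤ s) ∨ (0 < u 3 ∧ u 1 + u 2 ≤ s) := by omega
  · refine mem_add_edgeExponents_of_sub (i := 0) (j := 4) (by simp [pentagonCentral]) ha hx ?_
    constructor <;> simp only [tsub_single_add_single_apply, Fin.reduceEq, reduceIte] <;> omega
  · refine mem_add_edgeExponents_of_sub (i := 1) (j := 4) (by simp [pentagonCentral]) hb hx ?_
    constructor <;> simp only [tsub_single_add_single_apply, Fin.reduceEq, reduceIte] <;> omega
  · refine mem_add_edgeExponents_of_sub (i := 2) (j := 4) (by simp [pentagonCentral]) hp hx ?_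
    constructor <;> simp only [tsub_single_add_single_apply, Fin.reduceEq, reduceIte] <;> omega
  · refine mem_add_edgeExponents_of_sub (i := 3) (j := 4) (by simp [pentagonCentral]) hq hx ?_
    constructor <;> simp only [tsub_single_add_single_apply, Fin.reduceEq, reduceIte] <;> omega

theorem IsPowExponent.mem_add_edgeExponents_of_eq_zero (hu : IsPowExponent (s + 1) u)
    (hz : u 5 = 0) (hx : u 4 = 0) :
    u ∈ {v | IsPowExponent s v} + edgeExponents pentagonCentral := by
  obtain ⟨h, haq, haz, hbp, -, hpq, -, hzpq⟩ := hu
  obtain ⟨ha, hb, hpq'⟩ | ⟨ha, hp⟩ | ⟨hb, hq⟩ :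
      (0 < u 0 ∧ 0 < u 1 ∧ u 2 + u 3 ≤ s) ∨ (0 < u 0 ∧ 0 < u 2) ∨ (0 < u 1 ∧ 0 < u 3) := by omega
  · refine mem_add_edgeExponents_of_sub (i := 0) (j := 1) (by simp [pentagonCentral]) ha hb ?_
    constructor <;> simp only [tsub_single_add_single_apply, Fin.reduceEq, reduceIte] <;> omega
  · refine mem_add_edgeExponents_of_sub (i := 0) (j := 2) (by simp [pentagonCentral]) ha hp ?_
    constructor <;> simp only [tsub_single_add_single_apply, Fin.reduceEq, reduceIte] <;> omega
  · refine mem_add_edgeExponents_of_sub (i := 1) (j := 3) (by simp [pentagonCentral]) hb hq ?_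
    constructor <;> simp only [tsub_single_add_single_apply, Fin.reduceEq, reduceIte] <;> omega

theorem setOf_isPowExponent_succ (s : ℕ) :
    {u | IsPowExponent (s + 1) u} = {u | IsPowExponent s u} + edgeExponents pentagonCentral := by
  ext u
  constructor
  · intro hu
    rcases Nat.eq_zero_or_pos (u 5) with hz | hz
    · rcases Nat.eq_zero_or_pos (u 4) with hx | hx
      · exact hu.mem_add_edgeExponents_of_eq_zero hz hx
      · exact hu.mem_add_edgeExponents_of_x_pos hz hx
    · exact hu.mem_add_edgeExponents_of_z_pos hz
  · rintro ⟨v, hv, _, ⟨i, j, hij, rfl⟩, rfl⟩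
    exact hv.add_edge hij

end RemoveEdge

theorem edgeIdeal_pow_eq (K : Type*) [Field K] (s : ℕ) :
    edgeIdeal K pentagonCentral ^ s =
      Ideal.span ((fun u => monomial u (1 : K)) '' {u | IsPowExponent s u}) := by
  refine edgeIdeal_pow_eq_span_monomial K (A := fun s => {u | IsPowExponent s u}) ?_
    setOf_isPowExponent_succ s
  ext u
  exact isPowExponent_zero_iff

/-- The order of the generators: lexicographic, with `z` increasing, then `x`, `a`, `b` decreasing,
and finally by the distance of `p` from `a - b + 1`. For fixed `z, x, a, b`, this centre is
chosen so that a move `q → p` lowers the key where `a + q = p + q = s` and `b = 0`, and a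
move `p → q` lowers it where `b + p = p + q = s` and `a = 0`. -/
def key (u : Fin 6 →₀ ℕ) : ℕ ×ₗ ℤ ×ₗ ℤ ×ₗ ℤ ×ₗ ℕ :=
  toLex (u 5, toLex (-(u 4 : ℤ), toLex (-(u 0 : ℤ), toLex (-(u 1 : ℤ),
    (u 2 + u 1 - u 0 - 1 : ℤ).natAbs))))

theorem key_lt_key_iff {u v : Fin 6 →₀ ℕ} :
    key u < key v ↔ u 5 < v 5 ∨ u 5 = v 5 ∧ (v 4 < u 4 ∨ u 4 = v 4 ∧ (v 0 < u 0 ∨ u 0 = v 0 ∧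
      (v 1 < u 1 ∨ u 1 = v 1 ∧
        (u 2 + u 1 - u 0 - 1 : ℤ).natAbs < (v 2 + v 1 - v 0 - 1 : ℤ).natAbs))) := by
  simp only [key, Prod.Lex.toLex_lt_toLex, neg_lt_neg_iff, neg_inj, Nat.cast_lt, Nat.cast_inj]

theorem key_le_key_iff {u v : Fin 6 →₀ ℕ} :
    key u ≤ key v ↔ u 5 < v 5 ∨ u 5 = v 5 ∧ (v 4 < u 4 ∨ u 4 = v 4 ∧ (v 0 < u 0 ∨ u 0 = v 0 ∧
      (v 1 < u 1 ∨ u 1 = v 1 ∧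
        (u 2 + u 1 - u 0 - 1 : ℤ).natAbs ≤ (v 2 + v 1 - v 0 - 1 : ℤ).natAbs))) := by
  simp only [key, Prod.Lex.toLex_le_toLex, neg_lt_neg_iff, neg_inj,
    Nat.cast_lt, Nat.cast_inj]

section Exchange

variable {s : ℕ} {u v : Fin 6 →₀ ℕ}

theorem hasExchange_of_move (i k : Fin 6) (hi : u i < v i)
    (hw : IsPowExponent s (u + Finsupp.single i 1 - Finsupp.single k 1))
    (hlt : key (u + Finsupp.single i 1 - Finsupp.single k 1) < key u) :
    HasExchange {w | IsPowExponent s w ∧ key w < key u} u v :=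
  ⟨_, ⟨hw, hlt⟩, i, hi, tsub_le_self⟩

theorem IsPowExponent.hasExchange_of_z_lt_of_aq_eq (hu : IsPowExponent s u)
    (hv : IsPowExponent s v) (hz : v 5 < u 5) (hx : v 4 ≤ u 4) (hb : v 1 ≤ u 1)
    (hp : v 2 ≤ u 2 ∨ u 2 + u 3 = s) (haq : u 0 + u 3 = s) :
    HasExchange {w | IsPowExponent s w ∧ key w < key u} u v := by
  obtain ⟨h, -, haz, hbp, hbz, hpq, hxz, hzpq⟩ := hu
  obtain ⟨h', haq', -, -, -, hpq', -, -⟩ := hv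
  have hpq_eq : u 2 + u 3 = s := by omega
  have ha : u 0 < v 0 := by omega
  rcases Nat.eq_zero_or_pos (u 1) with hb0 | hb0
  · refine hasExchange_of_move 2 3 (by omega) ?_ ?_
    · constructor <;> simp only [add_single_tsub_single_apply, Fin.reduceEq, reduceIte] <;> omega
    · simp only [key_lt_key_iff, add_single_tsub_single_apply, Fin.reduceEq, reduceIte]
      omega
  · refine hasExchange_of_move 0 3 ha ?_ ?_
    · constructor <;> simp only [add_single_tsub_single_apply, Fin.reduceEq, reduceIte] <;> omega
    · simp [key_lt_key_iff]

theorem IsPowExponent.hasExchange_of_z_lt_of_bp_eq (hs : 2 ≤ s) (hu : IsPowExponent s u)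
    (hv : IsPowExponent s v) (hz : v 5 < u 5) (hx : v 4 ≤ u 4) (ha : v 0 ≤ u 0)
    (hq : v 3 ≤ u 3 ∨ u 2 + u 3 = s) (hbp : u 1 + u 2 = s) :
    HasExchange {w | IsPowExponent s w ∧ key w < key u} u v := by
  obtain ⟨h, haq, haz, -, hbz, hpq, hxz, hzpq⟩ := hu
  obtain ⟨h', -, -, hbp', -, hpq', -, -⟩ := hv
  have hpq_eq : u 2 + u 3 = s := by omega
  have hb : u 1 < v 1 := by omega
  rcases Nat.eq_zero_or_pos (u 0) with ha0 | ha0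
  · refine hasExchange_of_move 3 2 (by omega) ?_ ?_
    · constructor <;> simp only [add_single_tsub_single_apply, Fin.reduceEq, reduceIte] <;> omega
    · simp only [key_lt_key_iff, add_single_tsub_single_apply, Fin.reduceEq, reduceIte]
      omega
  · refine hasExchange_of_move 1 2 hb ?_ ?_
    · constructor <;> simp only [add_single_tsub_single_apply, Fin.reduceEq, reduceIte] <;> omega
    · simp [key_lt_key_iff]

theorem IsPowExponent.hasExchange_of_z_lt (hs : 2 ≤ s) (hu : IsPowExponent s u)
    (hv : IsPowExponent s v) (hz : v 5 < u 5) :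
    HasExchange {w | IsPowExponent s w ∧ key w < key u} u v := by
  have lower_z (i : Fin 6) (hi : u i < v i)
      (hw : IsPowExponent s (u + Finsupp.single i 1 - Finsupp.single 5 1)) :
      HasExchange {w | IsPowExponent s w ∧ key w < key u} u v := by
    refine hasExchange_of_move i 5 hi hw (key_lt_key_iff.mpr (Or.inl ?_))
    have : i ≠ 5 := by rintro rfl; omega
    simp only [add_single_tsub_single_apply, this, reduceIte]
    omega
  obtain ⟨h, haq, haz, hbp, hbz, hpq, hxz, hzpq⟩ := id hu
  by_cases hx : u 4 < v 4
  · refine lower_z 4 hx ?_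
    constructor <;> simp only [add_single_tsub_single_apply, Fin.reduceEq, reduceIte] <;> omega
  by_cases ha : u 0 < v 0 ∧ u 0 + u 3 < s
  · refine lower_z 0 ha.1 ?_
    constructor <;> simp only [add_single_tsub_single_apply, Fin.reduceEq, reduceIte] <;> omega
  by_cases hb : u 1 < v 1 ∧ u 1 + u 2 < s
  · refine lower_z 1 hb.1 ?_
    constructor <;> simp only [add_single_tsub_single_apply, Fin.reduceEq, reduceIte] <;> omega
  by_cases hp : u 2 < v 2 ∧ u 1 + u 2 < s ∧ u 2 + u 3 < s
  · refine lower_z 2 hp.1 ?_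
    constructor <;> simp only [add_single_tsub_single_apply, Fin.reduceEq, reduceIte] <;> omega
  by_cases hq : u 3 < v 3 ∧ u 0 + u 3 < s ∧ u 2 + u 3 < s
  · refine lower_z 3 hq.1 ?_
    constructor <;> simp only [add_single_tsub_single_apply, Fin.reduceEq, reduceIte] <;> omega
  by_cases haq_eq : u 0 + u 3 = s
  · exact hu.hasExchange_of_z_lt_of_aq_eq hv hz (by omega) (by omega) (by omega) haq_eq
  have hbp_eq : u 1 + u 2 = s := by
    have := hv.degree
    have := hv.pq_le
    omega
  exact hu.hasExchange_of_z_lt_of_bp_eq hs hv hz (by omega) (by omega) (by omega) hbp_eq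

theorem IsPowExponent.hasExchange_of_x_lt (hu : IsPowExponent s u) (hv : IsPowExponent s v)
    (hz : v 5 = u 5) (hx : u 4 < v 4) :
    HasExchange {w | IsPowExponent s w ∧ key w < key u} u v := by
  obtain ⟨h, haq, haz, hbp, hbz, hpq, hxz, hzpq⟩ := hu
  have hxz' := hv.xz_le
  rcases Nat.eq_zero_or_pos (u 0) with ha | ha
  · refine hasExchange_of_move 4 1 hx ?_ (by simp [key_lt_key_iff])
    constructor <;> simp only [add_single_tsub_single_apply, Fin.reduceEq, reduceIte] <;> omega
  · refine hasExchange_of_move 4 0 hx ?_ (by simp [key_lt_key_iff])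
    constructor <;> simp only [add_single_tsub_single_apply, Fin.reduceEq, reduceIte] <;> omega

theorem IsPowExponent.hasExchange_of_a_lt (hu : IsPowExponent s u) (hv : IsPowExponent s v)
    (hz : v 5 = u 5) (hx : v 4 = u 4) (ha : u 0 < v 0) :
    HasExchange {w | IsPowExponent s w ∧ key w < key u} u v := by
  obtain ⟨h, haq, haz, hbp, hbz, hpq, hxz, hzpq⟩ := hu
  obtain ⟨h', -, haz', -, -, -, -, -⟩ := hv
  obtain ⟨hb, haq_lt⟩ | ⟨hq, hz_lt⟩ | ⟨hp, haq_lt, hz_lt⟩ :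
      (0 < u 1 ∧ u 0 + u 3 < s) ∨ (0 < u 3 ∧ u 5 < u 2 + u 3) ∨
        (0 < u 2 ∧ u 0 + u 3 < s ∧ u 5 < u 2 + u 3) := by omega
  · refine hasExchange_of_move 0 1 ha ?_ (by simp [key_lt_key_iff])
    constructor <;> simp only [add_single_tsub_single_apply, Fin.reduceEq, reduceIte] <;> omega
  · refine hasExchange_of_move 0 3 ha ?_ (by simp [key_lt_key_iff])
    constructor <;> simp only [add_single_tsub_single_apply, Fin.reduceEq, reduceIte] <;> omega
  · refine hasExchange_of_move 0 2 ha ?_ (by simp [key_lt_key_iff])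
    constructor <;> simp only [add_single_tsub_single_apply, Fin.reduceEq, reduceIte] <;> omega

theorem IsPowExponent.hasExchange_of_b_lt (hu : IsPowExponent s u) (hv : IsPowExponent s v)
    (hz : v 5 = u 5) (hx : v 4 = u 4) (ha : v 0 = u 0) (hb : u 1 < v 1) :
    HasExchange {w | IsPowExponent s w ∧ key w < key u} u v := by
  obtain ⟨h, haq, haz, hbp, hbz, hpq, hxz, hzpq⟩ := hu
  obtain ⟨h', -, -, -, hbz', -, -, hzpq'⟩ := hv
  rcases Nat.eq_zero_or_pos (u 2) with hp | hp
  · refine hasExchange_of_move 1 3 hb ?_ (by simp [key_lt_key_iff])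
    constructor <;> simp only [add_single_tsub_single_apply, Fin.reduceEq, reduceIte] <;> omega
  · refine hasExchange_of_move 1 2 hb ?_ (by simp [key_lt_key_iff])
    constructor <;> simp only [add_single_tsub_single_apply, Fin.reduceEq, reduceIte] <;> omega

theorem IsPowExponent.hasExchange_of_natAbs_le (hu : IsPowExponent s u) (hv : IsPowExponent s v)
    (hz : v 5 = u 5) (hx : v 4 = u 4) (ha : v 0 = u 0) (hb : v 1 = u 1) (hp : v 2 ≠ u 2)
    (hle : (v 2 + v 1 - v 0 - 1 : ℤ).natAbs ≤ (u 2 + u 1 - u 0 - 1 : ℤ).natAbs) :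
    HasExchange {w | IsPowExponent s w ∧ key w < key u} u v := by
  obtain ⟨h, haq, haz, hbp, hbz, hpq, hxz, hzpq⟩ := hu
  obtain ⟨h', haq', -, hbp', -, -, -, -⟩ := hv
  rcases lt_or_gt_of_ne hp with hp | hp
  · refine hasExchange_of_move 3 2 (by omega) ?_ ?_
    · constructor <;> simp only [add_single_tsub_single_apply, Fin.reduceEq, reduceIte] <;> omega
    · simp only [key_lt_key_iff, add_single_tsub_single_apply, Fin.reduceEq, reduceIte]
      omega
  · refine hasExchange_of_move 2 3 hp ?_ ?_
    · constructor <;> simp only [add_single_tsub_single_apply, Fin.reduceEq, reduceIte] <;> omega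
    · simp only [key_lt_key_iff, add_single_tsub_single_apply, Fin.reduceEq, reduceIte]
      omega

theorem IsPowExponent.hasExchange (hs : 2 ≤ s) (hu : IsPowExponent s u) (hv : IsPowExponent s v)
    (hne : v ≠ u) (hle : key v ≤ key u) :
    HasExchange {w | IsPowExponent s w ∧ key w < key u} u v := by
  obtain hz | ⟨hz, hx | ⟨hx, ha | ⟨ha, hb | ⟨hb, hle⟩⟩⟩⟩ := key_le_key_iff.mp hle
  · exact hu.hasExchange_of_z_lt hs hv hz
  · exact hu.hasExchange_of_x_lt hv hz hx
  · exact hu.hasExchange_of_a_lt hv hz hx ha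
  · exact hu.hasExchange_of_b_lt hv hz hx ha hb
  · refine hu.hasExchange_of_natAbs_le hv hz hx ha hb (fun hp => hne ?_) hle
    have hq : v 3 = u 3 := by
      have := hu.degree
      have := hv.degree
      omega
    ext i
    fin_cases i <;> assumption

end Exchange

end pentagonCentral

/-- for every `s ≥ 2`, `I(G)^s` has linear quotients, where `G` is the
pentagon `a-p-z-q-b-a` together with a central vertex `x` adjacent to `a, b, p, q`. -/
theorem stmt14 {K : Type*} [Field K] (s : ℕ) (hs : 2 ≤ s) :
    HasLinearQuotients ((edgeIdeal K pentagonCentral) ^ s) := by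
  rw [pentagonCentral.edgeIdeal_pow_eq]
  exact hasLinearQuotients_span_monomial_of_hasExchange
    (pentagonCentral.finite_setOf_isPowExponent s) (fun _ hu => hu.degree_eq) pentagonCentral.key
    fun _ hu _ hv hne hle => hu.hasExchange hs hv hne hle
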